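/- Let X be a locally compact Hausdorff space and let k be a bounded symmetric positive definite kernel on X with k(·,x) ∈ C_0(X) for all x ∈ X, with RKHS H. Then k is c0-universal if and only if the embedding μ ↦ ∫_X k(·,x) dμ(x) from M_b(X) into H is injective, i.e., ∫_X k(·,x) dμ(x) = 0 implies μ = 0 for every μ ∈ M_b(X). -/

import Mathlib

open MeasureTheory Filter Topology RealInnerProductSpace
open scoped ZeroAtInfty

/-- Integral of a vector-valued function with respect to a finite signed measure,
defined via the Jordan decomposition. -/
noncomputable def svInt {X : Type*} [MeasurableSpace X] {E : Type*}
    [NormedAddCommGroup E] [NormedSpace ℝ E]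
    (μ : MeasureTheory.SignedMeasure X) (f : X → E) : E :=
  (∫ x, f x ∂μ.toJordanDecomposition.posPart) - ∫ x, f x ∂μ.toJordanDecomposition.negPart

open scoped CompactlySupported Pointwise

/-!
The map `R : H → C₀(X, ℝ)`, `R f = ⟪f, Φ ·⟫`, is bounded, and c₀-universality says that its range is
dense. By Hahn–Banach this holds iff no nonzero functional `Λ` on `C₀(X, ℝ)` satisfies `Λ ∘ R = 0`.
By Riesz representation the functionals are the integrals `g ↦ ∫ g dμ` against finite signed Radon
measures, and `∫ R f dμ = ⟪f, ∫ Φ dμ⟫`, so that `Λ ∘ R = 0` iff the embedding `∫ Φ dμ` vanishes.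

The Riesz representation comes from the one for positive functionals on `C_c(X, ℝ)`: a bounded
functional has the positive part `f ↦ sup {Λ h | 0 ≤ h ≤ f}` on the cone of nonnegative functions.
-/

theorem denseRange_iff_forall_comp_eq_zero {𝕜 E F : Type*} [RCLike 𝕜] [AddCommGroup E]
    [Module 𝕜 E] [TopologicalSpace E] [NormedAddCommGroup F] [NormedSpace 𝕜 F] (R : E →L[𝕜] F) :
    DenseRange R ↔ ∀ Λ : F →L[𝕜] 𝕜, Λ ∘L R = 0 → Λ = 0 := by
  refine ⟨fun hR Λ hΛ => ?_, fun h => ?_⟩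
  · exact DFunLike.coe_injective <| hR.equalizer Λ.continuous continuous_zero <|
      funext fun f => DFunLike.congr_fun hΛ f
  · let S := R.range.topologicalClosure
    have : IsClosed (S : Set F) := R.range.isClosed_topologicalClosure
    suffices hS : S = ⊤ from Submodule.dense_iff_topologicalClosure_eq_top.2 hS
    refine S.eq_top_iff'.2 fun g => (Submodule.Quotient.mk_eq_zero S).1 ?_
    refine SeparatingDual.eq_zero_of_forall_dual_eq_zero (R := 𝕜) fun Λ => ?_
    have hΛ : Λ ∘L S.mkQL = 0 := h _ <| ContinuousLinearMap.ext fun f => by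
      have hf : S.mkQL (R f) = 0 :=
        (Submodule.Quotient.mk_eq_zero S).2 (R.range.le_topologicalClosure ⟨f, rfl⟩)
      simp [hf]
    exact DFunLike.congr_fun hΛ g

section RieszKantorovich

theorem Icc_zero_add_Icc_zero {E : Type*} [AddCommGroup E] [Lattice E] [IsOrderedAddMonoid E]
    {f g : E} (hf : 0 ≤ f) (hg : 0 ≤ g) :
    Set.Icc 0 f + Set.Icc 0 g = Set.Icc 0 (f + g) := by
  refine Set.Subset.antisymm ?_ fun h ⟨h0, hle⟩ => ?_
  · simpa using Set.Icc_add_Icc_subset 0 f 0 g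
  · refine Set.mem_add.2 ⟨h ⊓ f, ⟨le_inf h0 hf, inf_le_right⟩, h - h ⊓ f,
      ⟨sub_nonneg.2 inf_le_left, ?_⟩, add_sub_cancel _ _⟩
    rw [sub_le_comm]
    exact le_inf (sub_le_self _ hg) (sub_le_iff_le_add.2 hle)

variable {E F : Type*} [AddCommGroup E] [Lattice E] [IsOrderedAddMonoid E] [Module ℝ E]
  [PosSMulMono ℝ E]

theorem exists_linearMap_eq_of_additive_on_nonneg [AddCommGroup F] [Module ℝ F] {p : E → F}
    (hadd : ∀ f g, 0 ≤ f → 0 ≤ g → p (f + g) = p f + p g)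
    (hsmul : ∀ (c : ℝ) f, 0 < c → 0 ≤ f → p (c • f) = c • p f) :
    ∃ P : E →ₗ[ℝ] F, ∀ f, 0 ≤ f → P f = p f := by
  -- `p f⁺ - p f⁻` may be computed from any decomposition of `f`; this gives additivity.
  have hsub {f a b : E} (ha : 0 ≤ a) (hb : 0 ≤ b) (hf : f = a - b) :
      p f⁺ - p f⁻ = p a - p b := by
    have hab : f⁺ + b = a + f⁻ := sub_eq_sub_iff_add_eq_add.1 ((posPart_sub_negPart f).trans hf)
    rw [sub_eq_sub_iff_add_eq_add, ← hadd _ _ (posPart_nonneg f) hb,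
      ← hadd _ _ ha (negPart_nonneg f), hab]
  have hp0 : p 0 = 0 := by simpa using hadd 0 0 le_rfl le_rfl
  have hpos (f : E) := posPart_nonneg f
  have hneg (f : E) := negPart_nonneg f
  let P : E →+ F := AddMonoidHom.mk' (fun f => p f⁺ - p f⁻) fun f g => by
    rw [hsub (add_nonneg (hpos f) (hpos g)) (add_nonneg (hneg f) (hneg g)),
      hadd _ _ (hpos f) (hpos g), hadd _ _ (hneg f) (hneg g)]
    · abel
    · nth_rw 1 [← posPart_sub_negPart f, ← posPart_sub_negPart g]
      abel
  have hP (f : E) : P f = p f⁺ - p f⁻ := rfl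
  have hPsmul {c : ℝ} (hc : 0 < c) (f : E) : P (c • f) = c • P f := by
    rw [hP, hsub (smul_nonneg hc.le (hpos f)) (smul_nonneg hc.le (hneg f))
      (by rw [← smul_sub, posPart_sub_negPart]), hsmul c _ hc (hpos f), hsmul c _ hc (hneg f),
      ← smul_sub, hP]
  refine ⟨{ P with map_smul' := fun c f => ?_ }, fun f hf => ?_⟩
  · change P (c • f) = c • P f
    rcases lt_trichotomy c 0 with hc | rfl | hc
    · have := hPsmul (neg_pos.2 hc) f
      rwa [neg_smul, neg_smul, map_neg, neg_inj] at this
    · simp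
    · exact hPsmul hc f
  · change P f = p f
    rw [hP, hsub hf le_rfl (sub_zero f).symm, hp0, sub_zero]

theorem exists_positiveLinearMap_isLUB_image_Icc (Λ : E →ₗ[ℝ] ℝ)
    (hΛ : ∀ f, 0 ≤ f → BddAbove (Λ '' Set.Icc 0 f)) :
    ∃ P : E →ₚ[ℝ] ℝ, ∀ f, 0 ≤ f → IsLUB (Λ '' Set.Icc 0 f) (P f) := by
  have hne {f : E} (hf : 0 ≤ f) : (Λ '' Set.Icc 0 f).Nonempty := (Set.nonempty_Icc.2 hf).image Λ
  obtain ⟨P, hP⟩ := exists_linearMap_eq_of_additive_on_nonneg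
    (p := fun f : E => sSup (Λ '' Set.Icc 0 f))
    (fun f g hf hg => by
      rw [← Icc_zero_add_Icc_zero hf hg, Set.image_add,
        csSup_add (hne hf) (hΛ f hf) (hne hg) (hΛ g hg)])
    (fun c f hc _ => by
      have hIcc : c • Set.Icc 0 f = Set.Icc 0 (c • f) := by
        simpa using (OrderIso.smulRight hc).image_Icc 0 f
      rw [← Real.sSup_smul_of_nonneg hc.le, ← image_smul_set, hIcc])
  have hlub (f : E) (hf : 0 ≤ f) : IsLUB (Λ '' Set.Icc 0 f) (P f) := by
    rw [hP f hf]
    exact isLUB_csSup (hne hf) (hΛ f hf)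
  exact ⟨PositiveLinearMap.mk₀ P fun f hf =>
    (hlub f hf).1 ⟨0, ⟨le_rfl, hf⟩, map_zero Λ⟩, hlub⟩

theorem exists_positiveLinearMap_sub_eq (Λ : E →ₗ[ℝ] ℝ)
    (hΛ : ∀ f, 0 ≤ f → BddAbove (Λ '' Set.Icc 0 f)) :
    ∃ P N : E →ₚ[ℝ] ℝ, (∀ f, P f - N f = Λ f) ∧
      ∀ f C, 0 ≤ f → (∀ h ∈ Set.Icc 0 f, |Λ h| ≤ C) → P f ≤ C ∧ N f ≤ C := by
  obtain ⟨P, hP⟩ := exists_positiveLinearMap_isLUB_image_Icc Λ hΛ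
  let N : E →ₚ[ℝ] ℝ := PositiveLinearMap.mk₀ (P.toLinearMap - Λ) fun f hf =>
    sub_nonneg.2 <| (hP f hf).1 ⟨f, ⟨hf, le_rfl⟩, rfl⟩
  have hN (f : E) : N f = P f - Λ f := rfl
  refine ⟨P, N, fun f => by rw [hN, sub_sub_cancel], fun f C hf hC => ⟨?_, ?_⟩⟩
  · exact (hP f hf).2 <| Set.forall_mem_image.2 fun h hh => (le_abs_self _).trans (hC h hh)
  · -- `N f` is the supremum of `-Λ` on `[0, f]`, through the reflection `h ↦ f - h`.
    rw [hN, sub_le_iff_le_add]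
    refine (hP f hf).2 <| Set.forall_mem_image.2 fun h hh => ?_
    have hfh := hC (f - h) ⟨sub_nonneg.2 hh.2, sub_le_self f hh.1⟩
    rw [map_sub, abs_sub_comm] at hfh
    exact sub_le_iff_le_add.1 ((le_abs_self _).trans hfh)

end RieszKantorovich

section ZeroAtInfty

variable {X : Type*} [TopologicalSpace X]

theorem norm_zeroAtInfty_le_iff {E : Type*} [SeminormedAddCommGroup E] (g : C₀(X, E)) {C : ℝ}
    (hC : 0 ≤ C) : ‖g‖ ≤ C ↔ ∀ x, ‖g x‖ ≤ C :=
  BoundedContinuousFunction.norm_le (f := g.toBCF) hC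

theorem denseRange_zeroAtInfty_iff {ι : Type*} (F : ι → C₀(X, ℝ)) :
    DenseRange F ↔ ∀ (g : C₀(X, ℝ)) (ε : ℝ), 0 < ε → ∃ i, ∀ x, |F i x - g x| ≤ ε := by
  have hdist (i : ι) (g : C₀(X, ℝ)) {ε : ℝ} (hε : 0 < ε) :
      dist g (F i) ≤ ε ↔ ∀ x, |F i x - g x| ≤ ε := by
    rw [dist_comm, dist_eq_norm, norm_zeroAtInfty_le_iff _ hε.le]
    rfl
  rw [Metric.denseRange_iff]
  refine forall_congr' fun g => ⟨fun h ε hε => ?_, fun h ε hε => ?_⟩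
  · obtain ⟨i, hi⟩ := h ε hε
    exact ⟨i, (hdist i g hε).1 hi.le⟩
  · obtain ⟨i, hi⟩ := h (ε / 2) (half_pos hε)
    exact ⟨i, ((hdist i g (half_pos hε)).2 hi).trans_lt (half_lt_self hε)⟩

/-- The inclusion of `C_c(X, ℝ)` into `C₀(X, ℝ)`, along which functionals on `C₀(X, ℝ)` are
restricted. -/
def compactlySupportedToZeroAtInfty : C_c(X, ℝ) →ₗ[ℝ] C₀(X, ℝ) where
  toFun f := f
  map_add' _ _ := rfl
  map_smul' _ _ := rfl

theorem denseRange_compactlySupportedToZeroAtInfty [R1Space X] :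
    DenseRange (compactlySupportedToZeroAtInfty (X := X)) := by
  refine (denseRange_zeroAtInfty_iff _).2 fun g ε hε => ?_
  have hsmall : ∀ᶠ x in cocompact X, |g x| < ε := by
    simpa using (zero_at_infty g).abs.eventually_lt_const (by simpa using hε)
  obtain ⟨K, hK, hKg⟩ := mem_cocompact.1 hsmall
  refine ⟨⟨⟨fun x => g x - max (-ε) (min (g x) ε), by fun_prop⟩,
    HasCompactSupport.intro hK fun x hx => ?_⟩, fun x => ?_⟩
  · obtain ⟨hl, hr⟩ : -ε < g x ∧ g x < ε := abs_lt.1 (hKg hx)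
    simp [min_eq_left hr.le, max_eq_right hl.le]
  · have htrunc : |max (-ε) (min (g x) ε)| ≤ ε :=
      abs_le.2 ⟨le_max_left _ _, max_le (by linarith) (min_le_right _ _)⟩
    simpa [compactlySupportedToZeroAtInfty] using htrunc

end ZeroAtInfty

section SignedIntegral

theorem svInt_toSignedMeasure_sub {X E : Type*} [MeasurableSpace X] [NormedAddCommGroup E]
    [NormedSpace ℝ E] {μ ν : Measure X} [IsFiniteMeasure μ] [IsFiniteMeasure ν] {f : X → E}
    (hμ : Integrable f μ) (hν : Integrable f ν) :
    svInt (μ.toSignedMeasure - ν.toSignedMeasure) f = ∫ x, f x ∂μ - ∫ x, f x ∂ν := by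
  set j := (μ.toSignedMeasure - ν.toSignedMeasure).toJordanDecomposition with hj
  have hparts : μ + j.negPart = j.posPart + ν := by
    rw [← Measure.toSignedMeasure_eq_toSignedMeasure_iff, Measure.toSignedMeasure_add,
      Measure.toSignedMeasure_add, ← sub_eq_sub_iff_add_eq_add]
    exact (SignedMeasure.toSignedMeasure_toJordanDecomposition _).symm
  have hpos : Integrable f j.posPart := by
    rw [hj, Measure.toJordanDecomposition_toSignedMeasure_sub]
    exact hμ.mono_measure Measure.sub_le
  have hneg : Integrable f j.negPart := by
    rw [hj, Measure.toJordanDecomposition_toSignedMeasure_sub]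
    exact hν.mono_measure Measure.sub_le
  rw [svInt, sub_eq_sub_iff_add_eq_add, ← integral_add_measure hpos hν,
    ← integral_add_measure hμ hneg, hparts]

theorem inner_svInt {X H : Type*} [MeasurableSpace X] [NormedAddCommGroup H]
    [InnerProductSpace ℝ H] [CompleteSpace H] {μ : SignedMeasure X} {Φ : X → H}
    (hΦ : Integrable Φ μ.totalVariation) (f : H) :
    ⟪f, svInt μ Φ⟫ = svInt μ fun x => ⟪f, Φ x⟫ := by
  obtain ⟨hpos, hneg⟩ := integrable_add_measure.1 hΦ
  rw [svInt, inner_sub_right, ← integral_inner hpos, ← integral_inner hneg, svInt]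

variable {X : Type*} [TopologicalSpace X] [MeasurableSpace X] [OpensMeasurableSpace X]

theorem integrable_zeroAtInfty (g : C₀(X, ℝ)) (μ : Measure X) [IsFiniteMeasure μ] :
    Integrable g μ :=
  g.toBCF.integrable μ

/-- The element of the dual of `C₀(X, ℝ)` given by integration against a finite signed measure, as
in the Riesz representation theorem. -/
noncomputable def signedIntegral (μ : SignedMeasure X) : C₀(X, ℝ) →L[ℝ] ℝ :=
  LinearMap.mkContinuous
    { toFun := fun g => svInt μ g
      map_add' := fun f g => by
        simp only [svInt, ZeroAtInftyContinuousMap.coe_add, Pi.add_apply,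
          integral_add (integrable_zeroAtInfty f _) (integrable_zeroAtInfty g _)]
        ring
      map_smul' := fun c g => by
        simp only [svInt, ZeroAtInftyContinuousMap.coe_smul, Pi.smul_apply, integral_smul,
          ← smul_sub, RingHom.id_apply] }
    (μ.toJordanDecomposition.posPart.real Set.univ + μ.toJordanDecomposition.negPart.real Set.univ)
    fun g => by
      have hg : ∀ x, ‖g x‖ ≤ ‖g‖ := (norm_zeroAtInfty_le_iff g (norm_nonneg g)).1 le_rfl
      have hbound (ν : Measure X) [IsFiniteMeasure ν] : ‖∫ x, g x ∂ν‖ ≤ ‖g‖ * ν.real Set.univ :=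
        norm_integral_le_of_norm_le_const (ae_of_all ν hg)
      refine (norm_sub_le_of_le (hbound _) (hbound _)).trans_eq ?_
      ring

theorem signedIntegral_apply (μ : SignedMeasure X) (g : C₀(X, ℝ)) :
    signedIntegral μ g = svInt μ g :=
  rfl

end SignedIntegral

section InnerRegular

variable {X : Type*} [TopologicalSpace X] [T2Space X] [MeasurableSpace X] [OpensMeasurableSpace X]

theorem innerRegular_of_le {μ ν : Measure X} [IsFiniteMeasure ν] [ν.InnerRegular] (h : μ ≤ ν) :
    μ.InnerRegular := by
  refine ⟨fun A hA r hr => ?_⟩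
  obtain ⟨K, hKA, hK, hlt⟩ := hA.exists_isCompact_sdiff_lt (μ := ν) (measure_ne_top ν A)
    (tsub_pos_of_lt hr).ne'
  refine ⟨K, hKA, hK, lt_of_not_ge fun hle => lt_irrefl (μ A) ?_⟩
  calc
    μ A = μ K + μ (A \ K) := by
      rw [← measure_inter_add_sdiff A hK.measurableSet, Set.inter_eq_right.2 hKA]
    _ ≤ r + μ (A \ K) := by gcongr
    _ < r + (μ A - r) :=
      (ENNReal.add_lt_add_iff_left (hr.trans_le le_top).ne).2 ((h _).trans_lt hlt)
    _ = μ A := add_tsub_cancel_of_le hr.le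

theorem innerRegular_totalVariation_toSignedMeasure_sub (μ ν : Measure X)
    [IsFiniteMeasure μ] [IsFiniteMeasure ν] [μ.InnerRegular] [ν.InnerRegular] :
    (μ.toSignedMeasure - ν.toSignedMeasure).totalVariation.InnerRegular := by
  rw [SignedMeasure.totalVariation, Measure.toJordanDecomposition_toSignedMeasure_sub]
  have := innerRegular_of_le (Measure.sub_le (μ := μ) (ν := ν))
  have := innerRegular_of_le (Measure.sub_le (μ := ν) (ν := μ))
  exact inferInstanceAs (μ - ν + (ν - μ)).InnerRegular

end InnerRegular

section RieszRepresentation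

variable {X : Type*} [TopologicalSpace X] [T2Space X] [LocallyCompactSpace X] [MeasurableSpace X]
  [BorelSpace X]

theorem isFiniteMeasure_rieszMeasure (P : C_c(X, ℝ) →ₚ[ℝ] ℝ) {C : ℝ}
    (hP : ∀ f : C_c(X, ℝ), (∀ x, f x ∈ Set.Icc 0 1) → P f ≤ C) :
    IsFiniteMeasure (RealRMK.rieszMeasure P) := by
  refine ⟨?_⟩
  rw [isOpen_univ.measure_eq_iSup_isCompact]
  refine (iSup₂_le fun K _ => iSup_le fun hK => ?_).trans_lt (ENNReal.ofReal_lt_top (r := C))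
  obtain ⟨f, hfK, -, hfc, hf⟩ := exists_continuous_one_zero_of_isCompact hK isClosed_empty
    (Set.disjoint_empty K)
  let f' : C_c(X, ℝ) := ⟨f, hfc⟩
  exact (RealRMK.rieszMeasure_le_of_eq_one P (f := f') (fun x => (hf x).1) hK hfK).trans
    (ENNReal.ofReal_le_ofReal (hP f' hf))

theorem exists_signedIntegral_eq (Λ : C₀(X, ℝ) →L[ℝ] ℝ) :
    ∃ μ : SignedMeasure X, μ.totalVariation.InnerRegular ∧ signedIntegral μ = Λ := by
  let ι := compactlySupportedToZeroAtInfty (X := X)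
  have : PosSMulMono ℝ C_c(X, ℝ) :=
    ⟨fun c hc f g hfg x => mul_le_mul_of_nonneg_left (hfg x) hc⟩
  have hIcc {f h : C_c(X, ℝ)} (hh : h ∈ Set.Icc 0 f) : |Λ (ι h)| ≤ ‖Λ‖ * ‖ι f‖ := by
    refine Λ.le_of_opNorm_le_of_le le_rfl <|
      (norm_zeroAtInfty_le_iff _ (norm_nonneg _)).2 fun x => ?_
    have hf := (norm_zeroAtInfty_le_iff (ι f) (norm_nonneg _)).1 le_rfl x
    exact (abs_of_nonneg (hh.1 x)).trans_le ((hh.2 x).trans (le_of_abs_le hf))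
  obtain ⟨P, N, hPN, hbound⟩ := exists_positiveLinearMap_sub_eq (Λ.toLinearMap ∘ₗ ι) fun f _ =>
    ⟨‖Λ‖ * ‖ι f‖, Set.forall_mem_image.2 fun h hh => le_of_abs_le (hIcc hh)⟩
  have hnorm {f : C_c(X, ℝ)} (hf : ∀ x, f x ∈ Set.Icc 0 1) : P f ≤ ‖Λ‖ * 1 ∧ N f ≤ ‖Λ‖ * 1 := by
    refine hbound f _ (fun x => (hf x).1) fun h hh => (hIcc hh).trans ?_
    gcongr
    exact (norm_zeroAtInfty_le_iff _ zero_le_one).2 fun x =>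
      (abs_of_nonneg (hf x).1).trans_le (hf x).2
  have := isFiniteMeasure_rieszMeasure P fun f hf => (hnorm hf).1
  have := isFiniteMeasure_rieszMeasure N fun f hf => (hnorm hf).2
  refine ⟨_, innerRegular_totalVariation_toSignedMeasure_sub (RealRMK.rieszMeasure P)
    (RealRMK.rieszMeasure N), DFunLike.coe_injective <|
      denseRange_compactlySupportedToZeroAtInfty.equalizer (map_continuous _) Λ.continuous <|
      funext fun f => ?_⟩
  calc svInt _ f = ∫ x, f x ∂(RealRMK.rieszMeasure P) - ∫ x, f x ∂(RealRMK.rieszMeasure N) :=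
        svInt_toSignedMeasure_sub f.integrable f.integrable
    _ = P f - N f := by rw [RealRMK.integral_rieszMeasure, RealRMK.integral_rieszMeasure]
    _ = Λ (ι f) := hPN f

theorem signedIntegral_eq_zero_iff {μ : SignedMeasure X} (hμ : μ.totalVariation.InnerRegular) :
    signedIntegral μ = 0 ↔ μ = 0 := by
  refine ⟨fun h => ?_, fun h => ?_⟩
  · set j := μ.toJordanDecomposition with hj
    have := innerRegular_of_le (μ := j.posPart) (ν := μ.totalVariation)
      (Measure.le_add_right le_rfl)
    have := innerRegular_of_le (μ := j.negPart) (ν := μ.totalVariation)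
      (Measure.le_add_left le_rfl)
    have hparts : j.posPart = j.negPart :=
      Measure.ext_of_integral_eq_on_compactlySupported fun f =>
        sub_eq_zero.1 (DFunLike.congr_fun h (compactlySupportedToZeroAtInfty f))
    ext A hA
    rw [μ.apply_eq_posPart_real_sub_negPart_real hA, ← hj, hparts, sub_self]
    rfl
  · ext g
    simp [h, signedIntegral_apply, svInt, SignedMeasure.toJordanDecomposition_zero]

end RieszRepresentation

section FeatureMap

variable {X H : Type*} [NormedAddCommGroup H] [InnerProductSpace ℝ H]

theorem isClosed_setOf_tendsto_inner {Φ : X → H} {B : ℝ} (hB : ∀ x, ‖Φ x‖ ≤ B) (l : Filter X)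
    (a : H) : IsClosed {f | Tendsto (fun x => ⟪f, Φ x⟫) l (𝓝 ⟪f, a⟫)} := by
  have hlip (x : X) : LipschitzWith B.toNNReal fun f => ⟪f, Φ x⟫ := by
    refine LipschitzWith.of_dist_le' fun f g => ?_
    rw [Real.dist_eq, ← inner_sub_left, dist_eq_norm, mul_comm]
    exact (abs_real_inner_le_norm _ _).trans (by gcongr; exact hB x)
  exact (LipschitzWith.uniformEquicontinuous _ _ hlip).equicontinuous.isClosed_setOfPred_tendsto
    (by fun_prop)

theorem tendsto_inner_of_forall_tendsto_inner_range [CompleteSpace H] {Φ : X → H} {B : ℝ}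
    (hB : ∀ x, ‖Φ x‖ ≤ B) {l : Filter X} {a : H}
    (ha : a ∈ (Submodule.span ℝ (Set.range Φ)).topologicalClosure)
    (h : ∀ y, Tendsto (fun x => ⟪Φ y, Φ x⟫) l (𝓝 ⟪Φ y, a⟫)) (f : H) :
    Tendsto (fun x => ⟪f, Φ x⟫) l (𝓝 ⟪f, a⟫) := by
  -- Both sides depend only on the projection of `f` onto the closed span of the range of `Φ`.
  let S := (Submodule.span ℝ (Set.range Φ)).topologicalClosure
  have hspan : ∀ f ∈ Submodule.span ℝ (Set.range Φ), Tendsto (fun x => ⟪f, Φ x⟫) l (𝓝 ⟪f, a⟫) := by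
    intro f hf
    induction hf using Submodule.span_induction with
    | mem f hf => obtain ⟨y, rfl⟩ := hf; exact h y
    | zero => simpa only [inner_zero_left] using tendsto_const_nhds
    | add f g _ _ hf hg => simpa only [inner_add_left] using hf.add hg
    | smul c f _ hf => simpa only [real_inner_smul_left] using hf.const_mul c
  have hS : ∀ f ∈ S, Tendsto (fun x => ⟪f, Φ x⟫) l (𝓝 ⟪f, a⟫) :=
    closure_minimal hspan (isClosed_setOf_tendsto_inner hB l a)
  have hΦS (x : X) : Φ x ∈ S := Submodule.le_topologicalClosure _ (Submodule.subset_span ⟨x, rfl⟩)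
  have hproj {b : H} (hb : b ∈ S) : ⟪S.starProjection f, b⟫ = ⟪f, b⟫ := by
    rw [S.inner_starProjection_left_eq_right, S.starProjection_eq_self_iff.2 hb]
  simpa only [hproj ha, hproj (hΦS _)] using hS _ (S.starProjection_apply_mem f)

theorem exists_continuousLinearMap_zeroAtInfty_eq_inner [TopologicalSpace X] [CompleteSpace H]
    {Φ : X → H} {B : ℝ} (hB : ∀ x, ‖Φ x‖ ≤ B)
    (hC₀ : ∀ y, Continuous (fun x => ⟪Φ y, Φ x⟫) ∧
      Tendsto (fun x => ⟪Φ y, Φ x⟫) (cocompact X) (𝓝 0)) :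
    ∃ R : H →L[ℝ] C₀(X, ℝ), ∀ f x, R f x = ⟪f, Φ x⟫ := by
  have hcont (f : H) : Continuous fun x => ⟪f, Φ x⟫ :=
    continuous_iff_continuousAt.2 fun x => tendsto_inner_of_forall_tendsto_inner_range hB
      (Submodule.le_topologicalClosure _ (Submodule.subset_span ⟨x, rfl⟩))
      (fun y => (hC₀ y).1.tendsto x) f
  have hlim (f : H) : Tendsto (fun x => ⟪f, Φ x⟫) (cocompact X) (𝓝 0) := by
    simpa only [inner_zero_right] using tendsto_inner_of_forall_tendsto_inner_range hB
      (zero_mem _) (fun y => by simpa only [inner_zero_right] using (hC₀ y).2) f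
  let R : H →ₗ[ℝ] C₀(X, ℝ) :=
    { toFun := fun f => ⟨⟨fun x => ⟪f, Φ x⟫, hcont f⟩, hlim f⟩
      map_add' := fun f g => ZeroAtInftyContinuousMap.ext fun x => inner_add_left f g (Φ x)
      map_smul' := fun c f => ZeroAtInftyContinuousMap.ext fun x =>
        real_inner_smul_left f (Φ x) c }
  refine ⟨R.mkContinuous |B| fun f => (norm_zeroAtInfty_le_iff _ (by positivity)).2 fun x => ?_,
    fun f x => rfl⟩
  rw [mul_comm]
  exact (abs_real_inner_le_norm _ _).trans (by gcongr; exact (hB x).trans (le_abs_self B))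

section StrongMeasurability

variable [MeasurableSpace X] {Φ : X → H} {B : ℝ}

theorem countable_setOf_not_ae_eq_zero_inner {ι : Type*} {b : ι → H} (hb : Orthonormal ℝ b)
    (hB : ∀ x, ‖Φ x‖ ≤ B) (μ : Measure X) [IsFiniteMeasure μ]
    (hΦ : ∀ i, AEStronglyMeasurable (fun x => ⟪b i, Φ x⟫) μ) :
    {i | ¬ (fun x => ⟪b i, Φ x⟫) =ᵐ[μ] 0}.Countable := by
  have hbessel (s : Finset ι) (x : X) : ∑ i ∈ s, ⟪b i, Φ x⟫ ^ 2 ≤ B ^ 2 := by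
    calc ∑ i ∈ s, ⟪b i, Φ x⟫ ^ 2 = ∑ i ∈ s, ‖⟪b i, Φ x⟫‖ ^ 2 := by simp
      _ ≤ ‖Φ x‖ ^ 2 := hb.sum_inner_products_le (Φ x)
      _ ≤ B ^ 2 := by gcongr; exact hB x
  have hint (i : ι) : Integrable (fun x => ⟪b i, Φ x⟫ ^ 2) μ :=
    Integrable.of_bound ((hΦ i).pow 2) (B ^ 2) <| ae_of_all μ fun x => by
      simpa using hbessel {i} x
  have hsum : Summable fun i => ∫ x, ⟪b i, Φ x⟫ ^ 2 ∂μ := by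
    refine summable_of_sum_le (c := B ^ 2 * μ.real Set.univ)
      (fun i => integral_nonneg fun x => sq_nonneg _) fun s => ?_
    rw [← integral_finsetSum s fun i _ => hint i]
    refine (Real.le_norm_self _).trans
      (norm_integral_le_of_norm_le_const (ae_of_all μ fun x => ?_))
    rw [Real.norm_of_nonneg (Finset.sum_nonneg fun i _ => sq_nonneg _)]
    exact hbessel s x
  have hzero {i : ι} (hi : ∫ x, ⟪b i, Φ x⟫ ^ 2 ∂μ = 0) : (fun x => ⟪b i, Φ x⟫) =ᵐ[μ] 0 :=
    ((integral_eq_zero_iff_of_nonneg (fun x => sq_nonneg _) (hint i)).1 hi).mono fun x hx =>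
      (pow_eq_zero_iff two_ne_zero).1 hx
  exact hsum.countable_support.mono fun i hi => mt hzero hi

variable [TopologicalSpace X] [BorelSpace X]

theorem aestronglyMeasurable_of_continuous_inner [CompleteSpace H] (hB : ∀ x, ‖Φ x‖ ≤ B)
    (hΦ : ∀ f : H, Continuous fun x => ⟪f, Φ x⟫) (μ : Measure X) [IsFiniteMeasure μ]
    [μ.InnerRegular] : AEStronglyMeasurable Φ μ := by
  obtain ⟨w, b, -⟩ := exists_hilbertBasis ℝ H
  have hmeas (i : w) : AEStronglyMeasurable (fun x => ⟪b i, Φ x⟫) μ :=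
    (hΦ (b i)).aestronglyMeasurable
  -- `H` may be nonseparable, but only countably many coordinates of `Φ` are not a.e. zero, and the
  -- others vanish on the support of `μ` by continuity.
  let J : Set w := {i | ¬ (fun x => ⟪b i, Φ x⟫) =ᵐ[μ] 0}
  have : Countable J :=
    (countable_setOf_not_ae_eq_zero_inner b.orthonormal hB μ hmeas).to_subtype
  have hvanish {i : w} (hi : i ∉ J) {x : X} (hx : x ∈ μ.support) : ⟪b i, Φ x⟫ = 0 :=
    Measure.support_subset_of_isClosed (isClosed_eq (hΦ (b i)) continuous_const)
      (not_not.1 hi) hx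
  refine aestronglyMeasurable_of_tendsto_ae (atTop : Filter (Finset J))
    (f := fun s x => ∑ i ∈ s, ⟪b i, Φ x⟫ • b i) (fun s => ?_) ?_
  · exact Finset.aestronglyMeasurable_fun_sum s fun i _ =>
      (hmeas i).smul aestronglyMeasurable_const
  · filter_upwards [Measure.support_mem_ae_of_innerRegular (μ := μ)] with x hx
    have hexpansion := b.hasSum_repr (Φ x)
    simp only [b.repr_apply_apply] at hexpansion
    refine (hasSum_subtype_iff_of_support_subset (s := J) fun i hi => ?_).2 hexpansion
    contrapose! hi
    simp [hvanish hi hx]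

end StrongMeasurability

section Adjoint

variable [TopologicalSpace X] [MeasurableSpace X] [BorelSpace X] [CompleteSpace H]
  {Φ : X → H} {R : H →L[ℝ] C₀(X, ℝ)} {μ : SignedMeasure X}

theorem inner_svInt_eq_signedIntegral (hR : ∀ f x, R f x = ⟪f, Φ x⟫)
    (hμ : μ.totalVariation.InnerRegular) (f : H) : ⟪f, svInt μ Φ⟫ = signedIntegral μ (R f) := by
  have hB (x : X) : ‖Φ x‖ ≤ ‖R‖ := by
    rw [← innerSL_apply_norm ℝ (Φ x)]
    refine ContinuousLinearMap.opNorm_le_bound _ (norm_nonneg R) fun f => ?_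
    rw [innerSL_apply_apply, real_inner_comm, ← hR]
    exact (norm_zeroAtInfty_le_iff _ (by positivity)).1 (R.le_opNorm f) x
  have hΦ : AEStronglyMeasurable Φ μ.totalVariation :=
    aestronglyMeasurable_of_continuous_inner hB
      (fun f => (map_continuous (R f)).congr (hR f)) μ.totalVariation
  rw [inner_svInt (.of_bound hΦ ‖R‖ (ae_of_all _ hB)) f, signedIntegral_apply, funext (hR f)]

theorem svInt_eq_zero_iff_signedIntegral_comp_eq_zero (hR : ∀ f x, R f x = ⟪f, Φ x⟫)
    (hμ : μ.totalVariation.InnerRegular) : svInt μ Φ = 0 ↔ signedIntegral μ ∘L R = 0 := by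
  refine ⟨fun h => ContinuousLinearMap.ext fun f => ?_, fun h => ext_inner_left ℝ fun f => ?_⟩
  · rw [ContinuousLinearMap.comp_apply, ← inner_svInt_eq_signedIntegral hR hμ, h, inner_zero_right,
      zero_apply]
  · rw [inner_svInt_eq_signedIntegral hR hμ, inner_zero_right]
    exact DFunLike.congr_fun h f

end Adjoint

end FeatureMap

theorem stmt2_general {X H : Type*} [TopologicalSpace X] [T2Space X] [LocallyCompactSpace X]
    [MeasurableSpace X] [BorelSpace X] [NormedAddCommGroup H] [InnerProductSpace ℝ H]
    [CompleteSpace H] (Φ : X → H) (hbdd : ∃ C : ℝ, ∀ x y : X, |⟪Φ x, Φ y⟫| ≤ C)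
    (hC₀ : ∀ x : X, Continuous (fun y => ⟪Φ y, Φ x⟫) ∧
      Tendsto (fun y => ⟪Φ y, Φ x⟫) (cocompact X) (𝓝 0)) :
    (∀ (g : C₀(X, ℝ)) (ε : ℝ), 0 < ε → ∃ f : H, ∀ x : X, |⟪f, Φ x⟫ - g x| ≤ ε) ↔
      ∀ μ : SignedMeasure X, μ.totalVariation.InnerRegular → svInt μ Φ = 0 → μ = 0 := by
  obtain ⟨C, hC⟩ := hbdd
  have hB (x : X) : ‖Φ x‖ ≤ √C := by
    rw [norm_eq_sqrt_real_inner]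
    exact Real.sqrt_le_sqrt (le_of_abs_le (hC x x))
  obtain ⟨R, hR⟩ := exists_continuousLinearMap_zeroAtInfty_eq_inner hB
    (by simpa only [real_inner_comm] using hC₀)
  calc
    _ ↔ DenseRange R := by simp only [denseRange_zeroAtInfty_iff, hR]
    _ ↔ ∀ Λ : C₀(X, ℝ) →L[ℝ] ℝ, Λ ∘L R = 0 → Λ = 0 := denseRange_iff_forall_comp_eq_zero R
    _ ↔ ∀ μ : SignedMeasure X, μ.totalVariation.InnerRegular →
        signedIntegral μ ∘L R = 0 → signedIntegral μ = 0 :=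
      ⟨fun h μ _ => h _, fun h Λ => by
        obtain ⟨μ, hμ, rfl⟩ := exists_signedIntegral_eq Λ
        exact h μ hμ⟩
    _ ↔ _ := forall₂_congr fun μ hμ => imp_congr
      (svInt_eq_zero_iff_signedIntegral_comp_eq_zero hR hμ).symm (signedIntegral_eq_zero_iff hμ)

/-- Let `X` be a locally compact Hausdorff space and `k` a bounded
symmetric positive definite kernel on `X` with `k(·,x) ∈ C₀(X)` for all `x`, with RKHS
`H`.  Then `k` is c₀-universal (its RKHS is uniformly dense in `C₀(X)`) iff the embedding
`μ ↦ ∫ k(·,x) dμ(x)` of the finite signed Radon measures into `H` is injective. -/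
theorem stmt2
    {X : Type*} [TopologicalSpace X] [T2Space X] [LocallyCompactSpace X]
    [MeasurableSpace X] [BorelSpace X]
    (k : X → X → ℝ)
    (hkbdd : ∃ C : ℝ, ∀ x y : X, |k x y| ≤ C)
    (hkC0 : ∀ x : X, Continuous (fun y => k y x) ∧
      Tendsto (fun y => k y x) (cocompact X) (𝓝 0))
    {H : Type*} [NormedAddCommGroup H] [InnerProductSpace ℝ H] [CompleteSpace H]
    (T : H →ₗ[ℝ] (X → ℝ)) (hT : Function.Injective T)
    (Φ : X → H)
    (hk : ∀ x y : X, k x y = ⟪Φ x, Φ y⟫)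
    (hrepro : ∀ (f : H) (x : X), T f x = ⟪f, Φ x⟫) :
    (∀ (g : C₀(X, ℝ)) (ε : ℝ), 0 < ε → ∃ f : H, ∀ x : X, |T f x - g x| ≤ ε) ↔
      ∀ μ : MeasureTheory.SignedMeasure X, μ.totalVariation.InnerRegular →
        svInt μ Φ = 0 → μ = 0 := by
  simpa only [hrepro] using
    stmt2_general Φ (by simpa only [hk] using hkbdd) (by simpa only [hk] using hkC0)
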